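/- Let m ≥ 1 be an integer. There exists a constant C > 0, depending only on m, such that for every isotropic log-concave probability density p on ℝ^m: (i) sup_{x ∈ ℝ^m} p(x) ≤ C; (ii) p(x) ≥ C^{-1} for all x ∈ ℝ^m with ‖x‖ ≤ C^{-1}; (iii) p(x) ≤ C·exp(−‖x‖/C) for all x ∈ ℝ^m. -/

import Mathlib

open MeasureTheory

noncomputable section

/-- The Euclidean norm of a vector in `Fin m → ℝ`. -/
def eNorm {m : ℕ} (x : Fin m → ℝ) : ℝ := Real.sqrt (∑ i, x i ^ 2)

/-- A nonnegative function `p` on `ℝ^m` is log-concave: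
`p(tx + (1-t)y) ≥ p(x)^t p(y)^(1-t)` for `t ∈ [0,1]`. -/
def IsLogConcaveFn {m : ℕ} (p : (Fin m → ℝ) → ℝ) : Prop :=
  ∀ x y : Fin m → ℝ, ∀ t : ℝ, 0 ≤ t → t ≤ 1 →
    p x ^ t * p y ^ (1 - t) ≤ p (t • x + (1 - t) • y)

structure Iso {m : ℕ} (p : (Fin m → ℝ) → ℝ) : Prop where
  nn : ∀ x, 0 ≤ p x
  one : ∫ x, p x = 1
  lc : IsLogConcaveFn p
  mean : ∀ i, ∫ x, x i * p x = 0
  cov : ∀ i j, ∫ x, x i * x j * p x = if i = j then (1 : ℝ) else 0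

namespace Iso

variable {m : ℕ} {p : (Fin m → ℝ) → ℝ}

lemma integrable (h : Iso p) : Integrable p := by
  by_contra hn
  have := h.one
  rw [integral_undef hn] at this
  norm_num at this

lemma integrable_sq (h : Iso p) (i : Fin m) : Integrable (fun x => x i * x i * p x) := by
  by_contra hn
  have := h.cov i i
  rw [integral_undef hn] at this
  norm_num at this

lemma integrable_mul (h : Iso p) (i j : Fin m) : Integrable (fun x => x i * x j * p x) := by
  refine ((h.integrable_sq i).add (h.integrable_sq j)).mono' ?_ ?_
  · exact (by fun_prop : Continuous fun x : Fin m → ℝ => x i * x j).aestronglyMeasurable.mul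
      h.integrable.aestronglyMeasurable
  · refine Filter.Eventually.of_forall fun x => ?_
    have hp := h.nn x
    simp only [Real.norm_eq_abs, Pi.add_apply]
    rw [abs_mul, abs_of_nonneg hp, ← add_mul]
    refine mul_le_mul_of_nonneg_right ?_ hp
    rw [abs_le]
    constructor <;> nlinarith [sq_nonneg (x i + x j), sq_nonneg (x i - x j), sq_nonneg (x i), sq_nonneg (x j)]

lemma integrable_coord (h : Iso p) (i : Fin m) : Integrable (fun x => x i * p x) := by
  refine (h.integrable.add (h.integrable_sq i)).mono' ?_ ?_
  · exact (by fun_prop : Continuous fun x : Fin m → ℝ => x i).aestronglyMeasurable.mul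
      h.integrable.aestronglyMeasurable
  · refine Filter.Eventually.of_forall fun x => ?_
    have hp := h.nn x
    simp only [Real.norm_eq_abs, Pi.add_apply]
    rw [abs_mul, abs_of_nonneg hp]
    have : |x i| ≤ 1 + x i * x i := by
      rw [abs_le]
      constructor <;> nlinarith [sq_nonneg (x i + 1), sq_nonneg (x i - 1)]
    nlinarith

lemma integrable_lin (h : Iso p) (a : Fin m → ℝ) : Integrable (fun x => (∑ i, a i * x i) * p x) := by
  simp_rw [Finset.sum_mul, mul_assoc]
  exact integrable_finsetSum _ fun i _ => (h.integrable_coord i).const_mul _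

lemma integral_lin (h : Iso p) (a : Fin m → ℝ) : ∫ x, (∑ i, a i * x i) * p x = 0 := by
  simp_rw [Finset.sum_mul, mul_assoc]
  rw [integral_finsetSum _ fun i _ => (h.integrable_coord i).const_mul _]
  simp [integral_const_mul, h.mean]

lemma lin_sq (a x : Fin m → ℝ) (c : ℝ) : (∑ i, a i * x i) ^ 2 * c =
    ∑ i, ∑ j, a i * a j * (x i * x j * c) := by
  rw [sq, Finset.sum_mul_sum, Finset.sum_mul]
  refine Finset.sum_congr rfl fun i _ => ?_
  rw [Finset.sum_mul]
  exact Finset.sum_congr rfl fun j _ => by ring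

lemma integrable_lin_sq (h : Iso p) (a : Fin m → ℝ) :
    Integrable (fun x => (∑ i, a i * x i) ^ 2 * p x) := by
  simp_rw [lin_sq]
  exact integrable_finsetSum _ fun i _ => integrable_finsetSum _ fun j _ =>
    (h.integrable_mul i j).const_mul _

lemma integral_lin_sq (h : Iso p) (a : Fin m → ℝ) :
    ∫ x, (∑ i, a i * x i) ^ 2 * p x = ∑ i, a i ^ 2 := by
  simp_rw [lin_sq]
  rw [integral_finsetSum _ fun i _ => integrable_finsetSum _ fun j _ =>
    (h.integrable_mul i j).const_mul _]
  refine Finset.sum_congr rfl fun i _ => ?_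
  rw [integral_finsetSum _ fun j _ => (h.integrable_mul i j).const_mul _]
  simp [integral_const_mul, h.cov, sq]

lemma integrable_lin_sub_sq (h : Iso p) (a : Fin m → ℝ) (b : ℝ) :
    Integrable (fun x => (∑ i, a i * x i - b) ^ 2 * p x) := by
  have := ((h.integrable_lin_sq a).add ((h.integrable_lin a).const_mul (-2*b))).add
    (h.integrable.const_mul (b^2))
  refine this.congr (Filter.Eventually.of_forall fun x => ?_)
  simp only [Pi.add_apply]
  ring

lemma integral_lin_sub_sq (h : Iso p) (a : Fin m → ℝ) (b : ℝ) :
    ∫ x, (∑ i, a i * x i - b) ^ 2 * p x = ∑ i, a i ^ 2 + b ^ 2 := by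
  have e : (fun x : Fin m → ℝ => (∑ i, a i * x i - b) ^ 2 * p x) = fun x =>
      ((∑ i, a i * x i) ^ 2 * p x + (-2*b) * ((∑ i, a i * x i) * p x)) + b^2 * p x := by
    funext x; ring
  have hi : Integrable (fun x : Fin m → ℝ => (∑ i, a i * x i) ^ 2 * p x +
      (-2*b) * ((∑ i, a i * x i) * p x)) :=
    (h.integrable_lin_sq a).add ((h.integrable_lin a).const_mul (-2*b))
  rw [e, integral_add hi (h.integrable.const_mul (b^2)), integral_add (h.integrable_lin_sq a)
    ((h.integrable_lin a).const_mul (-2*b)), integral_const_mul, integral_const_mul,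
    h.integral_lin, h.integral_lin_sq, h.one]
  ring

lemma sqrt_le (h : Iso p) (x y : Fin m → ℝ) :
    √(p x) * √(p y) ≤ p ((1/2 : ℝ) • (x + y)) := by
  have := h.lc x y (1/2) (by norm_num) (by norm_num)
  rw [Real.sqrt_eq_rpow, Real.sqrt_eq_rpow]
  rw [smul_add]
  norm_num at this ⊢
  exact this

lemma integrable_half (h : Iso p) (x0 : Fin m → ℝ) :
    Integrable (fun x => p ((1/2 : ℝ) • (x0 + x))) := by
  have h1 : Integrable (fun x => p ((1/2 : ℝ) • x)) := h.integrable.comp_smul (by norm_num)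
  exact h1.comp_add_left x0

lemma integral_half (h : Iso p) (x0 : Fin m → ℝ) :
    ∫ x, p ((1/2 : ℝ) • (x0 + x)) = 2 ^ m := by
  rw [integral_add_left_eq_self (fun x => p ((1/2 : ℝ) • x)) x0, Measure.integral_comp_smul]
  simp [h.one]

lemma integrable_sqrt (h : Iso p) (x0 : Fin m → ℝ) :
    Integrable (fun x => √(p x0) * √(p x)) := by
  refine (h.integrable_half x0).mono' ?_ ?_
  · exact (Real.continuous_sqrt.comp_aestronglyMeasurable
      h.integrable.aestronglyMeasurable).const_mul _
  · refine Filter.Eventually.of_forall fun x => ?_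
    rw [Real.norm_eq_abs, abs_of_nonneg (by positivity)]
    exact h.sqrt_le x0 x

lemma integral_sqrt (h : Iso p) (x0 : Fin m → ℝ) :
    ∫ x, √(p x0) * √(p x) ≤ 2 ^ m := by
  rw [← h.integral_half x0]
  exact integral_mono (h.integrable_sqrt x0) (h.integrable_half x0) (h.sqrt_le x0)

/-- the constant -/
def cc (m : ℕ) : ℝ := (1 + 16 * 2 ^ m)⁻¹

lemma cc_pos (m : ℕ) : 0 < cc m := by unfold cc; positivity

lemma exists_far (h : Iso p) (x0 : Fin m → ℝ) (hx0 : 0 < p x0) (a : Fin m → ℝ) (k : Fin m) :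
    ∃ v, p x0 * Real.exp (-1) ≤ p (x0 + v) ∧ cc m * |a k| ≤ |∑ i, a i * v i| := by
  by_cases hak : a k = 0
  · refine ⟨0, ?_, by simp [hak]⟩
    rw [add_zero]
    have : Real.exp (-1) ≤ 1 := Real.exp_le_one_iff.2 (by norm_num)
    nlinarith
  by_contra! hcon
  have hc := cc_pos m
  set c := cc m with hcdef
  have hA : 0 < |a k| := abs_pos.2 hak
  have key : ∀ x, (∑ i, a i * x i - ∑ i, a i * x0 i) ^ 2 * p x ≤
      (c * |a k|) ^ 2 * (p x + 16 * (√(p x0) * √(p x))) := by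
    intro x
    have hp := h.nn x
    have hv : ∀ s : ℝ, ∑ i, a i * (s • (x - x0)) i = s * (∑ i, a i * x i - ∑ i, a i * x0 i) := by
      intro s
      rw [← Finset.sum_sub_distrib, Finset.mul_sum]
      refine Finset.sum_congr rfl fun i _ => ?_
      simp; ring
    set q := ∑ i, a i * x i - ∑ i, a i * x0 i with hq
    by_cases h1 : p x0 * Real.exp (-1) ≤ p x
    · have := hcon ((1:ℝ) • (x - x0)) (by simpa using h1)
      rw [hv, one_mul] at this
      have h2 : q ^ 2 ≤ (c * |a k|) ^ 2 := by
        rw [← sq_abs q]; gcongr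
      have : 0 ≤ 16 * (√(p x0) * √(p x)) := by positivity
      calc q ^ 2 * p x ≤ (c * |a k|) ^ 2 * p x := by gcongr
        _ ≤ _ := by gcongr; linarith
    rcases hp.eq_or_lt with h0 | hpos
    · rw [← h0]; simp
    push Not at h1
    set t := Real.log (p x0 / p x) with ht
    have het : Real.exp t = p x0 / p x := Real.exp_log (by positivity)
    have ht1 : 1 < t := by
      rw [ht, Real.lt_log_iff_exp_lt (by positivity), lt_div_iff₀ hpos]
      rw [Real.exp_neg, ← div_eq_mul_inv, lt_div_iff₀ (Real.exp_pos _)] at h1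
      linarith
    have hpx : p x = p x0 * Real.exp (-t) := by
      rw [Real.exp_neg, het]; field_simp
    have hmem : p x0 * Real.exp (-1) ≤ p (x0 + t⁻¹ • (x - x0)) := by
      have := h.lc x x0 t⁻¹ (by positivity) (inv_le_one_of_one_le₀ ht1.le)
      have e : t⁻¹ • x + (1 - t⁻¹) • x0 = x0 + t⁻¹ • (x - x0) := by module
      rw [e] at this
      refine le_trans (le_of_eq ?_) this
      rw [hpx, Real.mul_rpow hx0.le (Real.exp_pos _).le, ← Real.exp_mul, mul_right_comm,
        ← Real.rpow_add hx0]
      have : t ≠ 0 := by positivity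
      simp [this]
    have h3 := hcon _ hmem
    rw [hv, abs_mul, abs_of_pos (by positivity : 0 < t⁻¹), inv_mul_lt_iff₀ (by positivity)] at h3
    have h4 : q ^ 2 ≤ (c * |a k|) ^ 2 * t ^ 2 := by
      rw [← sq_abs q, ← mul_pow, mul_comm _ t]; gcongr
    have h5 : t ^ 2 * p x ≤ 16 * (√(p x0) * √(p x)) := by
      have e1 : √(p x) = √(p x0) * Real.exp (-t/2) := by
        rw [hpx, Real.sqrt_mul hx0.le, Real.exp_half]
      have e2 : √(p x0) * √(p x) = p x0 * Real.exp (-t/2) := by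
        rw [e1, ← mul_assoc, Real.mul_self_sqrt hx0.le]
      rw [e2, hpx]
      have e3 : Real.exp (-t) = Real.exp (-t/2) * (Real.exp (-t/4))^2 := by
        rw [← Real.exp_nat_mul, ← Real.exp_add]; congr 1; push_cast; ring
      rw [e3]
      have e4 : t * Real.exp (-t/4) ≤ 4 := by
        have := Real.add_one_le_exp (t/4)
        have e5 : Real.exp (-t/4) = (Real.exp (t/4))⁻¹ := by rw [← Real.exp_neg]; ring_nf
        rw [e5, ← div_eq_mul_inv, div_le_iff₀ (Real.exp_pos _)]
        linarith
      have e6 : (t * Real.exp (-t/4))^2 ≤ 4^2 := by gcongr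
      have e7 : 0 ≤ p x0 * Real.exp (-t/2) := by positivity
      nlinarith
    calc q ^ 2 * p x ≤ (c * |a k|) ^ 2 * t ^ 2 * p x := by gcongr
      _ = (c * |a k|) ^ 2 * (t ^ 2 * p x) := by ring
      _ ≤ _ := by gcongr; linarith
  have hInt : Integrable (fun x => (c * |a k|) ^ 2 * (p x + 16 * (√(p x0) * √(p x)))) :=
    (h.integrable.add ((h.integrable_sqrt x0).const_mul 16)).const_mul _
  have := integral_mono (h.integrable_lin_sub_sq a _) hInt key
  rw [h.integral_lin_sub_sq, integral_const_mul, integral_add h.integrable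
    ((h.integrable_sqrt x0).const_mul 16), integral_const_mul 16, h.one] at this
  have h6 := h.integral_sqrt x0
  have h7 : a k ^ 2 ≤ ∑ i, a i ^ 2 :=
    Finset.single_le_sum (f := fun i => a i ^ 2) (fun i _ => sq_nonneg _) (Finset.mem_univ k)
  have h8 : (c * |a k|) ^ 2 * (1 + 16 * ∫ x, √(p x0) * √(p x)) ≤
      (c * |a k|) ^ 2 * (1 + 16 * 2 ^ m) := by gcongr
  have h9 : (c * |a k|) ^ 2 * (1 + 16 * 2 ^ m) = c * a k ^ 2 := by
    rw [mul_pow, sq_abs, hcdef, cc]; field_simp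
  have h10 : c < 1 := by
    rw [hcdef, cc]; apply inv_lt_one_of_one_lt₀; linarith [pow_pos (two_pos : (0:ℝ) < 2) m]
  have h11 : 0 < a k ^ 2 := by positivity
  nlinarith [sq_nonneg (∑ i, a i * x0 i)]

lemma exists_det (h : Iso p) (x0 : Fin m → ℝ) (hx0 : 0 < p x0) :
    ∃ V : Matrix (Fin m) (Fin m) ℝ, (∀ i, p x0 * Real.exp (-1) ≤ p (x0 + V i)) ∧
      cc m ^ m ≤ |V.det| := by
  have : ∀ s : Finset (Fin m), ∃ V : Matrix (Fin m) (Fin m) ℝ,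
      (∀ i ∈ s, p x0 * Real.exp (-1) ≤ p (x0 + V i)) ∧ (∀ i ∉ s, V i = Pi.single i 1) ∧
      cc m ^ s.card ≤ |V.det| := by
    intro s
    induction s using Finset.induction_on with
    | empty =>
      refine ⟨1, by simp, fun i _ => ?_, by simp⟩
      funext j; simp [Matrix.one_apply, Pi.single_apply, eq_comm]
    | insert k s hk ih =>
      obtain ⟨V, h1, h2, h3⟩ := ih
      have hlin : ∀ v : Fin m → ℝ, (V.updateRow k v).det =
          ∑ i, (V.updateRow k (Pi.single i 1)).det * v i := by
        intro v
        have e : v = ∑ i, v i • (Pi.single i (1:ℝ) : Fin m → ℝ) := by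
          funext j; simp [Finset.sum_apply, Pi.single_apply]
        let φ : (Fin m → ℝ) →ₗ[ℝ] ℝ :=
          { toFun := fun v => (V.updateRow k v).det
            map_add' := fun u w => Matrix.det_updateRow_add V k u w
            map_smul' := fun c u => Matrix.det_updateRow_smul V k c u }
        change φ v = ∑ i, φ (Pi.single i 1) * v i
        conv_lhs => rw [e, map_sum]
        simp [mul_comm]
      obtain ⟨v, hv1, hv2⟩ := h.exists_far x0 hx0
        (fun i => (V.updateRow k (Pi.single i 1)).det) k
      rw [← hlin] at hv2
      have e : V.updateRow k (Pi.single k 1) = V := by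
        rw [← h2 k hk]; exact Matrix.updateRow_eq_self V k
      rw [e] at hv2
      refine ⟨V.updateRow k v, ?_, ?_, ?_⟩
      · intro i hi
        by_cases hik : i = k
        · subst hik; rw [Matrix.updateRow_self]; exact hv1
        · have := h1 i ((Finset.mem_insert.1 hi).resolve_left hik)
          rw [Matrix.updateRow_ne hik]; exact this
      · intro i hi
        rw [Finset.mem_insert, not_or] at hi
        rw [← h2 i hi.2, Matrix.updateRow_ne hi.1]
      · rw [Finset.card_insert_of_notMem hk, pow_succ, mul_comm]
        refine le_trans ?_ hv2
        have := cc_pos m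
        gcongr
  obtain ⟨V, h1, -, h3⟩ := this Finset.univ
  exact ⟨V, fun i => h1 i (Finset.mem_univ i), by simpa using h3⟩

lemma convex_level (h : Iso p) (x0 : Fin m → ℝ) (θ : ℝ) (hθ : 0 < θ) :
    Convex ℝ {v | θ ≤ p (x0 + v)} := by
  intro x hx y hy a b ha hb hab
  obtain rfl : b = 1 - a := by linarith
  simp only [Set.mem_ofPred_eq] at *
  have := h.lc (x0 + x) (x0 + y) a ha (by linarith)
  have e : a • (x0 + x) + (1 - a) • (x0 + y) = x0 + (a • x + (1 - a) • y) := by module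
  rw [e] at this
  refine le_trans ?_ this
  calc θ = θ ^ a * θ ^ (1 - a) := by rw [← Real.rpow_add hθ]; simp
    _ ≤ _ := by
      have := h.nn (x0 + x)
      gcongr

lemma sup_bound (hm : 1 ≤ m) (h : Iso p) (x0 : Fin m → ℝ) :
    p x0 ≤ Real.exp 1 * (m : ℝ) ^ m / cc m ^ m := by
  have hc := cc_pos m
  have hm0 : (0:ℝ) < m := by exact_mod_cast hm
  rcases (h.nn x0).eq_or_lt with h0 | hx0
  · rw [← h0]; positivity
  obtain ⟨V, hV, hdet⟩ := h.exists_det x0 hx0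
  set θ := p x0 * Real.exp (-1) with hθ
  have hθ0 : 0 < θ := by positivity
  set K := {v | θ ≤ p (x0 + v)} with hK
  have hconv : Convex ℝ K := h.convex_level x0 θ hθ0
  have hzero : (0 : Fin m → ℝ) ∈ K := by
    simp only [hK, Set.mem_ofPred_eq, add_zero, hθ]
    have : Real.exp (-1) ≤ 1 := Real.exp_le_one_iff.2 (by norm_num)
    nlinarith
  have hsub : (Matrix.toLin' V.transpose) '' (Set.Icc (0 : Fin m → ℝ) (fun _ => (m:ℝ)⁻¹)) ⊆ K := by
    rintro _ ⟨u, ⟨hu0, hu1⟩, rfl⟩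
    have e : Matrix.toLin' V.transpose u = ∑ i, u i • V i := by
      funext j
      simp [Matrix.mulVec, dotProduct, Finset.sum_apply, mul_comm]
    rw [e]
    have hs1 : ∑ i, u i ≤ 1 := by
      calc ∑ i, u i ≤ ∑ i : Fin m, (m:ℝ)⁻¹ := Finset.sum_le_sum fun i _ => hu1 i
        _ = 1 := by simp; field_simp
    have hs0 : 0 ≤ ∑ i, u i := Finset.sum_nonneg fun i _ => hu0 i
    rcases hs0.eq_or_lt with h0 | hs
    · have := (Finset.sum_eq_zero_iff_of_nonneg (fun i _ => hu0 i)).1 h0.symm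
      have : ∑ i, u i • V i = 0 := Finset.sum_eq_zero fun i hi => by rw [this i hi]; simp
      rw [this]; exact hzero
    · have h1 : ∑ i, (u i / ∑ j, u j) • V i ∈ K :=
        hconv.sum_mem (fun i _ => div_nonneg (hu0 i) hs0)
          (by rw [← Finset.sum_div]; exact div_self hs.ne') (fun i _ => hV i)
      have h2 := hconv.smul_mem_of_zero_mem hzero h1 ⟨hs0, hs1⟩
      rw [Finset.smul_sum] at h2
      convert h2 using 2 with i
      rw [smul_smul, mul_div_cancel₀ _ hs.ne']
  have hvol : ENNReal.ofReal (|V.det| * ((m:ℝ)⁻¹) ^ m) ≤ volume K := by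
    refine le_trans (le_of_eq ?_) (measure_mono hsub)
    rw [Measure.addHaar_image_linearMap, Real.volume_Icc_pi]
    simp only [LinearMap.det_toLin', Matrix.det_transpose]
    rw [ENNReal.ofReal_mul (abs_nonneg _)]
    rw [ENNReal.ofReal_pow (by positivity)]
    simp
  have hInt : Integrable (fun v => p (x0 + v)) := h.integrable.comp_add_left x0
  have hmk := mul_meas_ge_le_integral_of_nonneg (μ := volume) (f := fun v => p (x0 + v))
    (Filter.Eventually.of_forall fun v => h.nn _) hInt θ
  rw [integral_add_left_eq_self, h.one] at hmk
  have hfin : volume K ≠ ⊤ := (hInt.measure_ge_lt_top hθ0).ne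
  have h1 : |V.det| * ((m:ℝ)⁻¹) ^ m ≤ volume.real K := (ENNReal.ofReal_le_iff_le_toReal hfin).1 hvol
  have h2 : θ * volume.real K ≤ 1 := hmk
  have h3 : θ * (cc m ^ m * ((m:ℝ)⁻¹) ^ m) ≤ 1 := by
    refine le_trans ?_ h2
    gcongr
    refine le_trans ?_ h1
    gcongr
  rw [le_div_iff₀ (by positivity)]
  rw [hθ, Real.exp_neg, inv_pow] at h3
  field_simp at h3
  linarith

lemma integrable_sum_sq (h : Iso p) : Integrable (fun x => (∑ i, x i ^ 2) * p x) := by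
  simp_rw [Finset.sum_mul]
  refine integrable_finsetSum _ fun i _ => ?_
  simpa [sq] using h.integrable_sq i

lemma integral_sum_sq (h : Iso p) : ∫ x, (∑ i, x i ^ 2) * p x = m := by
  have hi : ∀ i, Integrable (fun x : Fin m → ℝ => x i ^ 2 * p x) := fun i => by
    simpa [sq] using h.integrable_sq i
  simp_rw [Finset.sum_mul]
  rw [integral_finsetSum _ fun i _ => hi i]
  have : ∀ i, ∫ x, x i ^ 2 * p x = 1 := fun i => by simpa [sq] using h.cov i i
  simp [this]

lemma norm_sq_le (x : Fin m → ℝ) : ‖x‖ ^ 2 ≤ ∑ i, x i ^ 2 := by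
  have h0 : 0 ≤ ∑ i, x i ^ 2 := Finset.sum_nonneg fun i _ => sq_nonneg _
  have : ‖x‖ ≤ √(∑ i, x i ^ 2) := by
    rw [pi_norm_le_iff_of_nonneg (Real.sqrt_nonneg _)]
    intro i
    rw [Real.norm_eq_abs]
    refine Real.abs_le_sqrt ?_
    exact Finset.single_le_sum (f := fun i => x i ^ 2) (fun i _ => sq_nonneg _) (Finset.mem_univ i)
  calc ‖x‖ ^ 2 ≤ √(∑ i, x i ^ 2) ^ 2 := by gcongr
    _ = _ := Real.sq_sqrt h0

lemma far_mass (h : Iso p) (S : Set (Fin m → ℝ)) (ρ q : ℝ) (hρ : 0 < ρ) (hq : 0 < q)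
    (hS : ∀ x ∈ S, ρ ≤ ‖x‖ ∧ q ≤ p x) : ρ ^ 2 * q * volume.real S ≤ m := by
  have hmk := mul_meas_ge_le_integral_of_nonneg (μ := volume)
    (f := fun x : Fin m → ℝ => (∑ i, x i ^ 2) * p x)
    (Filter.Eventually.of_forall fun v => mul_nonneg (Finset.sum_nonneg fun i _ => sq_nonneg _)
      (h.nn _)) h.integrable_sum_sq (ρ ^ 2 * q)
  rw [h.integral_sum_sq] at hmk
  refine le_trans ?_ hmk
  gcongr
  · exact (h.integrable_sum_sq.measure_ge_lt_top (by positivity)).ne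
  · intro x hx
    obtain ⟨h1, h2⟩ := hS x hx
    have := norm_sq_le x
    change ρ ^ 2 * q ≤ (∑ i, x i ^ 2) * p x
    have h3 : ρ ^ 2 ≤ ‖x‖ ^ 2 := by gcongr
    have := h.nn x
    gcongr
    linarith

/-- Volume of the reference box. -/
def W (m : ℕ) : ℝ := volume.real (Metric.closedBall (0 : Fin m → ℝ) (2 * m))

lemma W_pos (hm : 1 ≤ m) : 0 < W m := by
  have hm0 : (0:ℝ) < m := by exact_mod_cast hm
  exact ENNReal.toReal_pos (Metric.measure_closedBall_pos _ _ (by positivity)).ne'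
    measure_closedBall_lt_top.ne

lemma core (hm : 1 ≤ m) (h : Iso p) (A : ℝ) (hA : 0 < A) (hpA : ∀ x, p x ≤ A) :
    1 / (2 * A) ≤ volume.real {x | ‖x‖ ≤ 2 * m ∧ 1 / (4 * W m) ≤ p x} := by
  have hm0 : (0:ℝ) < m := by exact_mod_cast hm
  have hm1 : (1:ℝ) ≤ m := by exact_mod_cast hm
  have hW := W_pos hm
  set c := 1 / (4 * W m) with hc
  have hc0 : 0 < c := by positivity
  set B := {x : Fin m → ℝ | ‖x‖ ≤ 2 * m ∧ c ≤ p x} with hB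
  have hBfin : volume B ≠ ⊤ := by
    refine ((measure_mono ?_).trans_lt
      (measure_closedBall_lt_top (x := (0 : Fin m → ℝ)) (r := 2 * m))).ne
    intro x hx
    simpa using hx.1
  set B' := toMeasurable volume B
  have hB' : MeasurableSet B' := measurableSet_toMeasurable _ _
  have hBB : volume B' = volume B := measure_toMeasurable _
  have key : ∀ x, p x ≤ (B'.indicator (fun _ => A) x +
      (Metric.closedBall (0 : Fin m → ℝ) (2 * m)).indicator (fun _ => c) x) +
      ((2 * m : ℝ) ^ 2)⁻¹ * ((∑ i, x i ^ 2) * p x) := by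
    intro x
    have n1 : 0 ≤ B'.indicator (fun _ => A) x := Set.indicator_nonneg (fun _ _ => hA.le) _
    have n2 : 0 ≤ (Metric.closedBall (0 : Fin m → ℝ) (2 * m)).indicator (fun _ => c) x :=
      Set.indicator_nonneg (fun _ _ => hc0.le) _
    have hp := h.nn x
    have hs : 0 ≤ ∑ i, x i ^ 2 := Finset.sum_nonneg fun i _ => sq_nonneg _
    have n3 : 0 ≤ ((2 * m : ℝ) ^ 2)⁻¹ * ((∑ i, x i ^ 2) * p x) := by positivity
    by_cases h1 : ‖x‖ ≤ 2 * m
    · by_cases h2 : c ≤ p x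
      · have : x ∈ B' := subset_toMeasurable _ _ ⟨h1, h2⟩
        rw [Set.indicator_of_mem this] at *
        linarith [hpA x]
      · have : x ∈ Metric.closedBall (0 : Fin m → ℝ) (2 * m) := by simpa using h1
        rw [Set.indicator_of_mem this] at *
        linarith
    · push Not at h1
      have h2 : (2 * m : ℝ) ^ 2 ≤ ∑ i, x i ^ 2 :=
        le_trans (by gcongr) (norm_sq_le x)
      have : p x ≤ ((2 * m : ℝ) ^ 2)⁻¹ * ((∑ i, x i ^ 2) * p x) := by
        rw [← mul_assoc]
        refine le_mul_of_one_le_left hp ?_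
        rw [← div_eq_inv_mul, le_div_iff₀ (by positivity)]
        linarith
      linarith
  have i1 : Integrable (B'.indicator (fun _ => A)) :=
    (integrable_indicator_iff hB').2 (integrableOn_const (by rw [hBB]; exact hBfin))
  have i2 : Integrable ((Metric.closedBall (0 : Fin m → ℝ) (2 * m)).indicator (fun _ => c)) :=
    (integrable_indicator_iff measurableSet_closedBall).2
      (integrableOn_const measure_closedBall_lt_top.ne)
  have i3 := h.integrable_sum_sq.const_mul (((2 * m : ℝ) ^ 2)⁻¹)
  have i12 : Integrable (fun x => B'.indicator (fun _ => A) x +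
      (Metric.closedBall (0 : Fin m → ℝ) (2 * m)).indicator (fun _ => c) x) := i1.add i2
  have := integral_mono h.integrable (i12.add i3) key
  rw [h.one] at this
  rw [integral_add' i12 i3, integral_add i1 i2, integral_const_mul, h.integral_sum_sq,
    integral_indicator hB', integral_indicator measurableSet_closedBall, setIntegral_const,
    setIntegral_const] at this
  have e1 : volume.real B' = volume.real B := by simp only [measureReal_def, hBB]
  have e2 : volume.real (Metric.closedBall (0 : Fin m → ℝ) (2 * m)) = W m := rfl
  rw [e1, e2] at this
  simp only [smul_eq_mul] at this
  have e3 : W m * c = 1 / 4 := by rw [hc]; field_simp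
  have e4 : ((2 * m : ℝ) ^ 2)⁻¹ * m ≤ 1 / 4 := by
    rw [← div_eq_inv_mul, div_le_iff₀ (by positivity)]
    nlinarith
  rw [div_le_iff₀ (by positivity)]
  linarith

lemma tail (hm : 1 ≤ m) : ∃ A L : ℝ, 0 < A ∧ 1 ≤ L ∧ ∀ p : (Fin m → ℝ) → ℝ, Iso p →
    ∀ x, p x ≤ A * Real.exp (-‖x‖ / L) := by
  have hm0 : (0:ℝ) < m := by exact_mod_cast hm
  have hW := W_pos hm
  have hcc := cc_pos m
  obtain ⟨A, hA⟩ : ∃ A, A = Real.exp 1 * (m : ℝ) ^ m / cc m ^ m := ⟨_, rfl⟩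
  have hA0 : 0 < A := by rw [hA]; positivity
  set c := 1 / (4 * W m) with hc
  have hc0 : 0 < c := by positivity
  obtain ⟨N, hN⟩ : ∃ N, N = 1 + m * 2 ^ m * (2 * A) * Real.exp 1 / c := ⟨_, rfl⟩
  have hN1 : 1 ≤ N := by rw [hN]; have : 0 ≤ m * 2 ^ m * (2 * A) * Real.exp 1 / c := by positivity
                         linarith
  set L := 2 * m + N with hL
  have hL1 : 1 ≤ L := by linarith
  refine ⟨A * Real.exp 2 + c, L, by positivity, hL1, fun p h x => ?_⟩
  have hpA : ∀ x, p x ≤ A := fun x => by rw [hA]; exact h.sup_bound hm x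
  by_cases hr : ‖x‖ < 2 * L
  · have h1 : 1 ≤ Real.exp 2 * Real.exp (-‖x‖ / L) := by
      rw [← Real.exp_add]
      refine Real.one_le_exp ?_
      rw [neg_div]
      have : ‖x‖ / L ≤ 2 := by rw [div_le_iff₀ (by linarith)]; linarith
      linarith
    have h2 : 0 < Real.exp (-‖x‖ / L) := Real.exp_pos _
    calc p x ≤ A * 1 := by simpa using hpA x
      _ ≤ A * (Real.exp 2 * Real.exp (-‖x‖ / L)) := by gcongr
      _ ≤ _ := by nlinarith [mul_pos hc0 h2]
  push Not at hr
  suffices hs : p x ≤ c * Real.exp (-‖x‖ / L) by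
    refine hs.trans ?_
    gcongr
    have : 0 ≤ A * Real.exp 2 := by positivity
    linarith
  by_contra! hcon
  have hx0 : 0 < ‖x‖ := by linarith
  have hL0 : 0 < L := by linarith
  set l := L / ‖x‖ with hl
  have hl0 : 0 < l := by positivity
  have hl2 : l ≤ 1 / 2 := by rw [hl, div_le_iff₀ hx0]; linarith
  have hlx : l * ‖x‖ = L := by rw [hl]; field_simp
  have hpx : 0 < p x := lt_trans (by positivity) hcon
  have h1 : c ^ l * Real.exp (-1) < p x ^ l := by
    have := Real.rpow_lt_rpow (by positivity) hcon hl0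
    rw [Real.mul_rpow hc0.le (Real.exp_pos _).le, ← Real.exp_mul] at this
    have e : -‖x‖ / L * l = -1 := by rw [hl]; field_simp
    rwa [e] at this
  set q := p x ^ l * c ^ (1 - l) with hq
  have hq1 : c * Real.exp (-1) < q := by
    have e : c = c ^ l * c ^ (1 - l) := by rw [← Real.rpow_add hc0]; simp
    have : 0 < c ^ (1 - l) := by positivity
    calc c * Real.exp (-1) = c ^ l * Real.exp (-1) * c ^ (1 - l) := by
          conv_lhs => rw [e]
          ring
      _ < q := by rw [hq]; gcongr
  have hq0 : 0 < q := by positivity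
  set B := {x : Fin m → ℝ | ‖x‖ ≤ 2 * m ∧ c ≤ p x} with hB
  have hBv : 1 / (2 * A) ≤ volume.real B := h.core hm A hA0 hpA
  set S := AffineMap.homothety x (1 - l) '' B with hS
  have hSm : ∀ y ∈ S, N ≤ ‖y‖ ∧ q ≤ p y := by
    rintro _ ⟨b, ⟨hb1, hb2⟩, rfl⟩
    have e : AffineMap.homothety x (1 - l) b = l • x + (1 - l) • b := by
      rw [AffineMap.homothety_apply, vsub_eq_sub, vadd_eq_add]; module
    rw [e]
    constructor
    · have h2 : ‖l • x‖ - ‖(1 - l) • b‖ ≤ ‖l • x + (1 - l) • b‖ := by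
        have := norm_sub_le (l • x + (1 - l) • b) ((1 - l) • b)
        rw [add_sub_cancel_right] at this
        linarith
      rw [norm_smul, norm_smul, Real.norm_eq_abs, Real.norm_eq_abs, abs_of_pos hl0,
        abs_of_nonneg (by linarith : 0 ≤ 1 - l), hlx] at h2
      have : (1 - l) * ‖b‖ ≤ 1 * (2 * m) := by gcongr; linarith
      linarith
    · refine le_trans ?_ (h.lc x b l hl0.le (by linarith))
      rw [hq]
      gcongr
      linarith
  have hmass := h.far_mass S N q (by linarith) hq0 hSm
  have hSv : volume.real S = (1 - l) ^ m * volume.real B := by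
    rw [hS, measureReal_def, Measure.addHaar_image_homothety, ENNReal.toReal_mul,
      ENNReal.toReal_ofReal (abs_nonneg _), abs_of_nonneg (pow_nonneg (by linarith) _)]
    simp [measureReal_def]
  have hSv2 : (1 / 2 : ℝ) ^ m * (1 / (2 * A)) ≤ volume.real S := by
    rw [hSv]
    have : (1 / 2 : ℝ) ≤ 1 - l := by linarith
    gcongr
  have h5 : N * (c * Real.exp (-1)) * ((1 / 2 : ℝ) ^ m * (1 / (2 * A))) ≤ m := by
    refine le_trans ?_ hmass
    have : N ≤ N ^ 2 := by nlinarith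
    gcongr
  have e6 : (c * Real.exp (-1)) * ((1 / 2 : ℝ) ^ m * (1 / (2 * A))) =
      (m * 2 ^ m * (2 * A) * Real.exp 1 / c)⁻¹ * m := by
    rw [Real.exp_neg, one_div_pow]; field_simp
  rw [mul_assoc, e6] at h5
  set T := m * 2 ^ m * (2 * A) * Real.exp 1 / c with hT
  have hT0 : 0 < T := by positivity
  have : N * (T⁻¹ * m) = m + m / T := by rw [hN]; field_simp; ring
  rw [this] at h5
  have : 0 < m / T := by positivity
  linarith

lemma poly_tail (hm : 1 ≤ m) : ∃ A : ℝ, 0 < A ∧ ∀ p : (Fin m → ℝ) → ℝ, Iso p →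
    ∀ x, p x ≤ A * (((1 + ‖x‖) ^ (m + 4))⁻¹) ^ 2 := by
  obtain ⟨A, L, hA, hL, h⟩ := tail hm
  set n : ℕ := (m + 4) * 2 with hn
  have hn1 : (1:ℝ) ≤ n := by rw [hn]; push_cast; linarith [(Nat.cast_nonneg m : (0:ℝ) ≤ m)]
  have hnL : 1 ≤ n * L := by nlinarith
  refine ⟨A * (n * L) ^ n, by positivity, fun p hp x => (h p hp x).trans ?_⟩
  have hx := norm_nonneg x
  have h1 : 1 + ‖x‖ ≤ (n * L) * Real.exp (‖x‖ / (n * L)) := by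
    have := Real.add_one_le_exp (‖x‖ / (n * L))
    have h2 : (n * L) * (‖x‖ / (n * L) + 1) ≤ (n * L) * Real.exp (‖x‖ / (n * L)) := by gcongr
    have e : (n * L) * (‖x‖ / (n * L) + 1) = ‖x‖ + n * L := by field_simp
    linarith
  have h2 : (1 + ‖x‖) ^ n ≤ (n * L) ^ n * Real.exp (‖x‖ / L) := by
    calc (1 + ‖x‖) ^ n ≤ ((n * L) * Real.exp (‖x‖ / (n * L))) ^ n := by gcongr
      _ = _ := by
        rw [mul_pow, ← Real.exp_nat_mul]
        congr 2
        field_simp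
  rw [← inv_pow, ← pow_mul, ← hn, inv_pow, mul_assoc, neg_div, Real.exp_neg]
  gcongr
  rw [← div_eq_mul_inv, le_div_iff₀ (by positivity), inv_mul_le_iff₀ (Real.exp_pos _)]
  linarith

lemma sep (hm : 1 ≤ m) (h : Iso p) (x0 : Fin m → ℝ) (δ : ℝ) (hδ : 0 < δ) (hx : p x0 < δ) :
    ∃ a : Fin m → ℝ, ∑ i, a i ^ 2 = 1 ∧
      ∀ᵐ x, ∑ i, a i * x0 i < ∑ i, a i * x i → p x < δ := by
  set K := {x | δ ≤ p x} with hK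
  have hconv : Convex ℝ K := by simpa using h.convex_level 0 δ hδ
  have hae : ∀ᵐ x, x ∈ K → x ∈ interior K := by
    have := hconv.addHaar_frontier (volume : Measure (Fin m → ℝ))
    filter_upwards [measure_eq_zero_iff_ae_notMem.1 this] with x hx hxK
    by_contra hxi
    exact hx ⟨subset_closure hxK, hxi⟩
  rcases (interior K).eq_empty_or_nonempty with he | ⟨y, hy⟩
  · refine ⟨Pi.single ⟨0, hm⟩ 1, by simp [Pi.single_apply], ?_⟩
    filter_upwards [hae] with x hx _
    by_contra! hc
    have := hx hc
    rw [he] at this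
    exact this
  · obtain ⟨f, hf⟩ := geometric_hahn_banach_open_point hconv.interior isOpen_interior
      (x := x0) (fun hc => by
        have hc' : x0 ∈ K := interior_subset hc
        exact absurd hc' (not_le.2 hx))
    set b : Fin m → ℝ := fun i => f (Pi.single i 1) with hb
    have hfb : ∀ x, f x = ∑ i, b i * x i := by
      intro x
      have e : x = ∑ i, x i • (Pi.single i (1:ℝ) : Fin m → ℝ) := by
        funext j; simp [Finset.sum_apply, Pi.single_apply]
      conv_lhs => rw [e, map_sum]
      simp [hb, mul_comm]
    have hpos : 0 < ∑ i, b i ^ 2 := by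
      rcases (Finset.sum_nonneg fun i _ => sq_nonneg (b i) :
        0 ≤ ∑ i, b i ^ 2).eq_or_lt with h0 | h0
      · exfalso
        have h1 := (Finset.sum_eq_zero_iff_of_nonneg (fun i _ => sq_nonneg (b i))).1 h0.symm
        have h2 : ∀ x, f x = 0 := fun x => by
          rw [hfb]
          refine Finset.sum_eq_zero fun i hi => ?_
          rw [pow_eq_zero_iff two_ne_zero |>.1 (h1 i hi), zero_mul]
        have := hf y hy
        rw [h2, h2] at this
        exact lt_irrefl _ this
      · exact h0
    set s := √(∑ i, b i ^ 2) with hs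
    have hs0 : 0 < s := Real.sqrt_pos.2 hpos
    refine ⟨fun i => s⁻¹ * b i, ?_, ?_⟩
    · simp_rw [mul_pow]
      rw [← Finset.mul_sum, inv_pow, hs, Real.sq_sqrt hpos.le, inv_mul_cancel₀ hpos.ne']
    · filter_upwards [hae] with x hx
      simp_rw [mul_assoc]
      rw [← Finset.mul_sum, ← Finset.mul_sum, ← hfb, ← hfb]
      intro hlt
      by_contra! hc
      have h1 := hf x (hx hc)
      have : s⁻¹ * f x < s⁻¹ * f x0 := by gcongr
      linarith

lemma integrable_G : Integrable (fun x : Fin m → ℝ => ((1 + ‖x‖) ^ (m + 1))⁻¹) := by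
  have := integrable_one_add_norm (E := Fin m → ℝ) (μ := volume) (r := (m + 1 : ℕ)) (by simp)
  refine this.congr (Filter.Eventually.of_forall fun x => ?_)
  have hx := norm_nonneg x
  simp only
  rw [Real.rpow_neg (by positivity), Real.rpow_natCast]

lemma lower (hm : 1 ≤ m) : ∃ δ s : ℝ, 0 < δ ∧ 0 < s ∧ ∀ p : (Fin m → ℝ) → ℝ, Iso p →
    ∀ x, ‖x‖ ≤ s → δ ≤ p x := by
  obtain ⟨A, hA, htail⟩ := poly_tail hm
  have hm0 : (0:ℝ) < m := by exact_mod_cast hm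
  obtain ⟨I, hI⟩ : ∃ I, I = ∫ x : Fin m → ℝ, ((1 + ‖x‖) ^ (m + 1))⁻¹ := ⟨_, rfl⟩
  have hI0 : 0 ≤ I := by
    rw [hI]; exact integral_nonneg fun x => by positivity
  obtain ⟨K, hK⟩ : ∃ K, K = m ^ 3 * A * I + 1 := ⟨_, rfl⟩
  have hK0 : 0 < K := by rw [hK]; positivity
  obtain ⟨d, hd⟩ : ∃ d, d = 1 / (8 * K * m * (√A * I + 1)) := ⟨_, rfl⟩
  have hd0 : 0 < d := by rw [hd]; positivity
  refine ⟨d ^ 2, 1 / (8 * K * m * m), by positivity, by positivity, fun p h x0 hx0 => ?_⟩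
  by_contra! hcon
  obtain ⟨a, ha, hae⟩ := h.sep hm x0 (d ^ 2) (by positivity) hcon
  have ha1 : ∀ i, |a i| ≤ 1 := fun i => by
    rw [← sq_le_one_iff_abs_le_one, ← ha]
    exact Finset.single_le_sum (f := fun i => a i ^ 2) (fun i _ => sq_nonneg _) (Finset.mem_univ i)
  have hf : ∀ x : Fin m → ℝ, |∑ i, a i * x i| ≤ m * ‖x‖ := by
    intro x
    calc |∑ i, a i * x i| ≤ ∑ i, |a i * x i| := Finset.abs_sum_le_sum_abs _ _
      _ ≤ ∑ i : Fin m, ‖x‖ := by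
        refine Finset.sum_le_sum fun i _ => ?_
        rw [abs_mul]
        calc |a i| * |x i| ≤ 1 * ‖x‖ := by
              gcongr
              · exact ha1 i
              · exact norm_le_pi_norm x i
          _ = ‖x‖ := one_mul _
      _ = _ := by simp
  obtain ⟨σ, hσ⟩ : ∃ σ, σ = 1 / (8 * K * m) := ⟨_, rfl⟩
  have hσ0 : 0 < σ := by rw [hσ]; positivity
  have hfx0 : ∑ i, a i * x0 i ≤ σ := by
    refine (le_abs_self _).trans ((hf x0).trans ?_)
    calc m * ‖x0‖ ≤ m * (1 / (8 * K * m * m)) := by gcongr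
      _ = σ := by rw [hσ]; field_simp
  have key : ∀ᵐ x, 2 * ((∑ i, a i * x i) ^ 2 * p x) ≤
      ((-K) * ((∑ i, a i * x i) * p x) + (2 * K * σ) * p x) +
      (2 * K * m * d * √A + m ^ 3 * A / K) * ((1 + ‖x‖) ^ (m + 1))⁻¹ := by
    filter_upwards [hae] with x hx
    have hp := h.nn x
    have hr := norm_nonneg x
    set f := ∑ i, a i * x i
    have hfm := hf x
    have ht := htail p h x
    set r := ‖x‖ with hr'
    set G := ((1 + r) ^ (m + 1))⁻¹ with hG
    have hG0 : 0 < G := by positivity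
    have hH : ((1 + r) ^ (m + 4))⁻¹ = G * ((1 + r) ^ 3)⁻¹ := by
      rw [hG, ← mul_inv, ← pow_add]
    set H := ((1 + r) ^ (m + 4))⁻¹ with hHdef
    have hH0 : 0 < H := by positivity
    have hrH : r * H ≤ G := by
      rw [hH, mul_comm, mul_assoc]
      refine mul_le_of_le_one_right hG0.le ?_
      rw [← div_eq_inv_mul, div_le_one (by positivity)]
      nlinarith [pow_nonneg hr 2, pow_nonneg hr 3]
    have hr3H : r ^ 3 * H ≤ G := by
      rw [hH, mul_comm, mul_assoc]
      refine mul_le_of_le_one_right hG0.le ?_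
      rw [← div_eq_inv_mul, div_le_one (by positivity)]
      gcongr
      linarith
    have hH1 : H ≤ 1 := inv_le_one_of_one_le₀ (one_le_pow₀ (by linarith))
    have hr3 : r ^ 3 * p x ≤ A * G := by
      calc r ^ 3 * p x ≤ r ^ 3 * (A * H ^ 2) := by gcongr
        _ = A * (r ^ 3 * H) * H := by ring
        _ ≤ A * G * 1 := by gcongr
        _ = A * G := by ring
    have hsq : √(p x) ≤ √A * H := by
      rw [← Real.sqrt_sq hH0.le, ← Real.sqrt_mul hA.le]
      exact Real.sqrt_le_sqrt ht
    have b1 : max f 0 * p x ≤ σ * p x + m * d * √A * G := by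
      have n1 : 0 ≤ m * d * √A * G := by positivity
      by_cases hfs : f ≤ σ
      · have : max f 0 * p x ≤ σ * p x := by
          gcongr
          exact max_le hfs hσ0.le
        linarith
      · push Not at hfs
        have hpd := hx (lt_of_le_of_lt hfx0 hfs)
        have hsd : √(p x) ≤ d := by
          rw [Real.sqrt_le_left hd0.le]; exact hpd.le
        have : max f 0 * p x ≤ m * d * √A * G := by
          rw [max_eq_left (by linarith)]
          calc f * p x = f * (√(p x) * √(p x)) := by rw [Real.mul_self_sqrt hp]
            _ ≤ (m * r) * (d * (√A * H)) := by
              gcongr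
              exact (le_abs_self _).trans hfm
            _ = m * d * √A * (r * H) := by ring
            _ ≤ _ := by gcongr
        have : 0 ≤ σ * p x := by positivity
        linarith
    have b2 : |f| = 2 * max f 0 - f := by
      rcases le_total 0 f with h0 | h0
      · rw [abs_of_nonneg h0, max_eq_left h0]; ring
      · rw [abs_of_nonpos h0, max_eq_right h0]; ring
    have b3 : 2 * f ^ 2 ≤ K * |f| + |f| ^ 3 / K := by
      rw [← sq_abs f]
      have e : K * |f| + |f| ^ 3 / K - 2 * |f| ^ 2 = |f| * (K - |f|) ^ 2 / K := by
        field_simp; ring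
      have : 0 ≤ |f| * (K - |f|) ^ 2 / K := by positivity
      linarith
    have b4 : |f| ^ 3 / K * p x ≤ m ^ 3 * A / K * G := by
      calc |f| ^ 3 / K * p x ≤ (m * r) ^ 3 / K * p x := by gcongr
        _ = m ^ 3 / K * (r ^ 3 * p x) := by ring
        _ ≤ m ^ 3 / K * (A * G) := by gcongr
        _ = _ := by ring
    have b5 := mul_le_mul_of_nonneg_right b3 hp
    have b6 : K * (max f 0 * p x) ≤ K * (σ * p x + m * d * √A * G) := by gcongr
    rw [b2] at b5
    rw [b2] at b4
    linarith
  have i1 := (h.integrable_lin a).const_mul (-K)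
  have i2 := h.integrable.const_mul (2 * K * σ)
  have i3 := (integrable_G (m := m)).const_mul (2 * K * m * d * √A + m ^ 3 * A / K)
  have i12 : Integrable (fun x => (-K) * ((∑ i, a i * x i) * p x) + (2 * K * σ) * p x) := i1.add i2
  have := integral_mono_ae ((h.integrable_lin_sq a).const_mul 2) (i12.add i3) key
  rw [integral_const_mul, h.integral_lin_sq, ha] at this
  rw [integral_add' i12 i3, integral_add i1 i2, integral_const_mul, integral_const_mul,
    integral_const_mul, h.integral_lin, h.one, ← hI] at this
  have e1 : 2 * K * σ ≤ 1 / 4 := by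
    have hm1 : (1:ℝ) ≤ m := by exact_mod_cast hm
    have e : 2 * K * σ = 1 / (4 * m) := by rw [hσ]; field_simp; norm_num
    rw [e, div_le_div_iff₀ (by positivity) (by norm_num)]
    linarith
  have e2 : 2 * K * m * d * √A * I ≤ 1 / 4 := by
    have : 2 * K * m * d * √A * I = 1 / 4 * ((√A * I) / (√A * I + 1)) := by
      rw [hd]; field_simp; ring
    rw [this]
    have : (√A * I) / (√A * I + 1) ≤ 1 := by
      rw [div_le_one (by positivity)]; linarith
    linarith
  have e3 : m ^ 3 * A / K * I ≤ 1 := by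
    rw [div_mul_eq_mul_div, div_le_one hK0, hK]; linarith
  nlinarith

end Iso

lemma eNorm_le {m : ℕ} (hm : 1 ≤ m) (x : Fin m → ℝ) : eNorm x ≤ m * ‖x‖ := by
  have hm1 : (1:ℝ) ≤ m := by exact_mod_cast hm
  unfold eNorm
  rw [Real.sqrt_le_left (by positivity)]
  calc ∑ i, x i ^ 2 ≤ ∑ i : Fin m, ‖x‖ ^ 2 := by
        refine Finset.sum_le_sum fun i _ => ?_
        rw [← sq_abs]
        gcongr
        exact norm_le_pi_norm x i
    _ = m * ‖x‖ ^ 2 := by simp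
    _ ≤ (m * ‖x‖) ^ 2 := by
      rw [mul_pow]; gcongr; nlinarith

lemma norm_le_eNorm {m : ℕ} (x : Fin m → ℝ) : ‖x‖ ≤ eNorm x :=
  Real.le_sqrt_of_sq_le (Iso.norm_sq_le x)

/-- For each `m ≥ 1` there is `C > 0` depending only on `m` such that every
isotropic log-concave probability density `p` on `ℝ^m` satisfies
(i) `p ≤ C`, (ii) `p(x) ≥ C⁻¹` for `‖x‖ ≤ C⁻¹`, (iii) `p(x) ≤ C exp(−‖x‖/C)`. -/
theorem stmt_17 (m : ℕ) (hm : 1 ≤ m) :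
    ∃ C : ℝ, 0 < C ∧
      ∀ p : (Fin m → ℝ) → ℝ,
        (∀ x, 0 ≤ p x) →
        (∫ x, p x ∂(MeasureTheory.volume) = 1) →
        IsLogConcaveFn p →
        (∀ i, ∫ x, x i * p x ∂(MeasureTheory.volume) = 0) →
        (∀ i j, ∫ x, x i * x j * p x ∂(MeasureTheory.volume)
            = if i = j then (1 : ℝ) else 0) →
        (∀ x, p x ≤ C) ∧
        (∀ x : Fin m → ℝ, eNorm x ≤ C⁻¹ → C⁻¹ ≤ p x) ∧
        (∀ x : Fin m → ℝ, p x ≤ C * Real.exp (- eNorm x / C)) := by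
  obtain ⟨A, L, hA, hL, htail⟩ := Iso.tail hm
  obtain ⟨δ, s, hδ, hs, hlow⟩ := Iso.lower hm
  have hm1 : (1:ℝ) ≤ m := by exact_mod_cast hm
  obtain ⟨C, hC⟩ : ∃ C, C = A + m * L + δ⁻¹ + s⁻¹ := ⟨_, rfl⟩
  have p1 : 0 < m * L := by positivity
  have p2 : 0 < δ⁻¹ := by positivity
  have p3 : 0 < s⁻¹ := by positivity
  have hC0 : 0 < C := by rw [hC]; positivity
  refine ⟨C, hC0, fun p nn one lc mean cov => ?_⟩
  have h : Iso p := ⟨nn, one, lc, mean, cov⟩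
  have h3 : ∀ x : Fin m → ℝ, p x ≤ C * Real.exp (- eNorm x / C) := by
    intro x
    refine (htail p h x).trans ?_
    have hA' : A ≤ C := by linarith
    have hx := norm_nonneg x
    have : eNorm x / C ≤ ‖x‖ / L := by
      rw [div_le_div_iff₀ hC0 (by linarith)]
      calc eNorm x * L ≤ m * ‖x‖ * L := by gcongr; exact eNorm_le hm x
        _ = ‖x‖ * (m * L) := by ring
        _ ≤ ‖x‖ * C := by gcongr; linarith
    have : -‖x‖ / L ≤ - eNorm x / C := by rw [neg_div, neg_div]; linarith
    gcongr
  refine ⟨fun x => ?_, fun x hx => ?_, h3⟩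
  · refine (h3 x).trans ?_
    refine mul_le_of_le_one_right hC0.le (Real.exp_le_one_iff.2 ?_)
    rw [neg_div]
    have : 0 ≤ eNorm x / C := div_nonneg (Real.sqrt_nonneg _) hC0.le
    linarith
  · have h1 : C⁻¹ ≤ δ := inv_le_of_inv_le₀ hδ (by linarith)
    have h2 : C⁻¹ ≤ s := inv_le_of_inv_le₀ hs (by linarith)
    exact h1.trans (hlow p h x ((norm_le_eNorm x).trans (hx.trans h2)))
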